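/- Let a ≥ 1, b ≥ 0, 1 ≤ c ≤ a, 0 ≤ e ≤ b be integers, and set τ = (a,1^b), μ = (c,1^e). Let p, d : ℕ → ℕ be sequences with m ≤ p(m) ≤ d(m) for all m and lim_{m→∞} p(m)/d(m) = θ ∈ (0,1). Then lim_{m→∞} (−1)^{c+e} · binom(τ,μ) · C_μ^τ(d(m)) / ∏_{i=1}^{e+1} (p(m) − i + 1)_{μ_i} = (−1/θ)^{c+e} · binom(τ,μ), where μ_1 = c and μ_2 = ⋯ = μ_{e+1} = 1, and (z)_n = z(z+1)⋯(z+n−1) denotes the rising factorial. -/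

import Mathlib

open Filter

/-- The generalized binomial coefficient `binom(τ, μ)` for the hooks `τ = (a, 1^b)` and
`μ = (c, 1^e)` with `1 ≤ c ≤ a`, `0 ≤ e ≤ b`:
`binom(τ,μ) = C(a-1, a-c) · C(b, b-e) · [(a+e)(b+c) - (a-c)(b-e)] / (c+e)²`. -/
noncomputable def hookBinom (a b c e : ℕ) : ℝ :=
  (Nat.choose (a - 1) (a - c) : ℝ) * (Nat.choose b (b - e) : ℝ) *
    (((a : ℝ) + e) * ((b : ℝ) + c) - ((a : ℝ) - c) * ((b : ℝ) - e)) / ((c : ℝ) + e) ^ 2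

/-- For the hooks `τ = (a, 1^b)`, `μ = (c, 1^e)`, the polynomial
`C_μ^τ(X) = (X + (a(a-1) - b(b+1))/(a+b)) · ∏_{i=2}^c (X + a + i - 2) · ∏_{i=1}^e (X - b - i)`. -/
noncomputable def hookC (a b c e : ℕ) (X : ℝ) : ℝ :=
  (X + ((a : ℝ) * ((a : ℝ) - 1) - (b : ℝ) * ((b : ℝ) + 1)) / ((a : ℝ) + (b : ℝ))) *
    (∏ i ∈ Finset.Icc 2 c, (X + (a : ℝ) + (i : ℝ) - 2)) *
    ∏ i ∈ Finset.Icc 1 e, (X - (b : ℝ) - (i : ℝ))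

/-- The generalized Pochhammer symbol `∏_{i=1}^{e+1} (p - i + 1)_{μ_i}` for the hook
`μ = (c, 1^e)` (so `μ_1 = c` and `μ_2 = ⋯ = μ_{e+1} = 1`), where
`(z)_n = z(z+1)⋯(z+n-1)` is the rising factorial. -/
noncomputable def hookPoch (p c e : ℕ) : ℝ :=
  ∏ i ∈ Finset.Icc 1 (e + 1),
    Polynomial.eval ((p : ℝ) - (i : ℝ) + 1) (ascPochhammer ℝ (if i = 1 then c else 1))

/-!
`C_μ^τ(X)` and the generalized Pochhammer symbol, as functions of `X` and of `p`, are monic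
polynomials of degree `|μ| = c + e`. Hence `C_μ^τ(d) / ∏ (p - i + 1)_{μ_i} ~ (d / p) ^ (c + e)` once
`p` and `d` tend to infinity, and `d / p → θ⁻¹`. Since `θ⁻¹ > 0`, that `d = p · (d / p)` tends to
infinity follows from `p` doing so.
-/

open Asymptotics Polynomial

section LeadingTerm

variable {𝕜 : Type*} [NormedField 𝕜] [LinearOrder 𝕜] [IsStrictOrderedRing 𝕜] [OrderTopology 𝕜]

theorem isEquivalent_pow_natDegree_of_monic {P : 𝕜[X]} (hP : P.Monic) :
    (fun x => P.eval x) ~[atTop] fun x => x ^ P.natDegree := by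
  simpa only [hP.leadingCoeff, one_mul] using P.isEquivalent_atTop_lead

theorem isEquivalent_add_const (k : 𝕜) : (fun x => x + k) ~[atTop] fun x => x := by
  simpa using isEquivalent_pow_natDegree_of_monic (monic_X_add_C k)

theorem isEquivalent_prod_sub {ι : Type*} (s : Finset ι) (v : ι → 𝕜) :
    (fun x => ∏ i ∈ s, (x - v i)) ~[atTop] fun x => x ^ s.card := by
  simpa only [Lagrange.eval_nodal, Lagrange.natDegree_nodal] using
    isEquivalent_pow_natDegree_of_monic (Lagrange.nodal_monic (s := s) (v := v))

theorem isEquivalent_ascPochhammer_eval (n : ℕ) :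
    (fun x => (ascPochhammer 𝕜 n).eval x) ~[atTop] fun x => x ^ n := by
  simpa only [ascPochhammer_natDegree] using
    isEquivalent_pow_natDegree_of_monic (monic_ascPochhammer 𝕜 n)

end LeadingTerm

theorem tendsto_atTop_of_tendsto_div {ι 𝕜 : Type*} [Field 𝕜] [LinearOrder 𝕜]
    [IsStrictOrderedRing 𝕜] [TopologicalSpace 𝕜] [OrderTopology 𝕜] {l : Filter ι} {u v : ι → 𝕜}
    {θ : 𝕜} (hθ : 0 < θ) (hu : Tendsto u l atTop) (huv : Tendsto (fun i => u i / v i) l (nhds θ)) :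
    Tendsto v l atTop := by
  refine (hu.atTop_mul_pos (inv_pos.2 hθ) (huv.inv₀ hθ.ne')).congr' ?_
  filter_upwards [hu.eventually_ne_atTop 0] with i hi
  rw [inv_div, mul_div_cancel₀ _ hi]

theorem hookC_isEquivalent_pow (a b : ℕ) {c : ℕ} (hc : 1 ≤ c) (e : ℕ) :
    hookC a b c e ~[atTop] fun x => x ^ (c + e) := by
  have harm : (fun x : ℝ => ∏ i ∈ Finset.Icc 2 c, (x + a + i - 2)) ~[atTop]
      fun x => x ^ (c - 1) := by
    simpa only [sub_sub_eq_add_sub, ← add_assoc, Nat.card_Icc, Nat.reduceSubDiff] using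
      isEquivalent_prod_sub (Finset.Icc 2 c) fun i : ℕ => 2 - ((a : ℝ) + i)
  have hleg : (fun x : ℝ => ∏ i ∈ Finset.Icc 1 e, (x - b - i)) ~[atTop] fun x => x ^ e := by
    simpa only [sub_sub, Nat.card_Icc, Nat.add_sub_cancel] using
      isEquivalent_prod_sub (Finset.Icc 1 e) fun i : ℕ => (b : ℝ) + i
  refine (((isEquivalent_add_const _).mul harm).mul hleg).congr_right (.of_forall fun x => ?_)
  simp only [Pi.mul_apply, mul_pow_sub_one (Nat.one_le_iff_ne_zero.1 hc), pow_add]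

theorem hookPoch_eq_ascPochhammer_mul_prod (p c e : ℕ) :
    hookPoch p c e = (ascPochhammer ℝ c).eval (p : ℝ) * ∏ i ∈ Finset.Icc 1 e, ((p : ℝ) - i) := by
  induction e with
  | zero => simp [hookPoch]
  | succ e ih =>
    have hlast : (p : ℝ) - (e + 1 + 1 : ℕ) + 1 = p - (e + 1 : ℕ) := by push_cast; ring
    rw [hookPoch, Finset.prod_Icc_succ_top (by omega), ← hookPoch, ih,
      Finset.prod_Icc_succ_top (by omega), if_neg (by omega), ascPochhammer_one, eval_X, hlast,
      mul_assoc]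

theorem hookPoch_isEquivalent_pow (c e : ℕ) :
    (fun p => hookPoch p c e) ~[atTop] fun p => (p : ℝ) ^ (c + e) := by
  have hleg : (fun x : ℝ => ∏ i ∈ Finset.Icc 1 e, (x - i)) ~[atTop] fun x => x ^ e := by
    simpa only [Nat.card_Icc, Nat.add_sub_cancel] using
      isEquivalent_prod_sub (Finset.Icc 1 e) fun i : ℕ => (i : ℝ)
  simp only [hookPoch_eq_ascPochhammer_mul_prod, pow_add]
  exact ((isEquivalent_ascPochhammer_eval c).mul hleg).comp_tendsto tendsto_natCast_atTop_atTop

theorem hook_coefficient_limit_general {ι : Type*} {l : Filter ι} (a b : ℕ) {c : ℕ} (hc : 1 ≤ c)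
    (e : ℕ) {p : ι → ℕ} {d : ι → ℝ} (hp : Tendsto p l atTop) {θ : ℝ} (hθ : 0 < θ)
    (hlim : Tendsto (fun i => (p i : ℝ) / d i) l (nhds θ)) :
    Tendsto
      (fun i => (-1 : ℝ) ^ (c + e) * hookBinom a b c e * hookC a b c e (d i) / hookPoch (p i) c e)
      l (nhds ((-1 / θ) ^ (c + e) * hookBinom a b c e)) := by
  have hd : Tendsto d l atTop :=
    tendsto_atTop_of_tendsto_div hθ (tendsto_natCast_atTop_atTop.comp hp) hlim
  have hequiv : (fun i => hookC a b c e (d i) / hookPoch (p i) c e) ~[l]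
      fun i => d i ^ (c + e) / (p i : ℝ) ^ (c + e) :=
    ((hookC_isEquivalent_pow a b hc e).comp_tendsto hd).div
      ((hookPoch_isEquivalent_pow c e).comp_tendsto hp)
  have hpow : Tendsto (fun i => d i ^ (c + e) / (p i : ℝ) ^ (c + e)) l (nhds (θ⁻¹ ^ (c + e))) := by
    simpa only [inv_div, div_pow] using (hlim.inv₀ hθ.ne').pow (c + e)
  have hratio := hequiv.symm.tendsto_nhds hpow
  convert hratio.const_mul ((-1) ^ (c + e) * hookBinom a b c e) using 2
  · rw [mul_div_assoc]
  · rw [div_eq_mul_inv, mul_pow, mul_right_comm]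

/-- Let `a ≥ 1`, `b ≥ 0`, `1 ≤ c ≤ a`, `0 ≤ e ≤ b` and `τ = (a, 1^b)`, `μ = (c, 1^e)`.
If `m ≤ p(m) ≤ d(m)` and `p(m)/d(m) → θ ∈ (0,1)`, then
`(-1)^{c+e} binom(τ,μ) C_μ^τ(d(m)) / ∏_{i=1}^{e+1} (p(m) - i + 1)_{μ_i}
  → (-1/θ)^{c+e} binom(τ,μ)` as `m → ∞`. -/
theorem hook_coefficient_limit (a b c e : ℕ) (ha : 1 ≤ a) (hc1 : 1 ≤ c) (hca : c ≤ a)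
    (heb : e ≤ b) (p d : ℕ → ℕ) (hpm : ∀ m, m ≤ p m) (hpd : ∀ m, p m ≤ d m)
    (θ : ℝ) (hθ0 : 0 < θ) (hθ1 : θ < 1)
    (hlim : Tendsto (fun m => (p m : ℝ) / (d m : ℝ)) atTop (nhds θ)) :
    Tendsto
      (fun m => (-1 : ℝ) ^ (c + e) * hookBinom a b c e * hookC a b c e (d m) /
        hookPoch (p m) c e)
      atTop (nhds ((-1 / θ) ^ (c + e) * hookBinom a b c e)) :=
  hook_coefficient_limit_general a b hc1 e (tendsto_atTop_mono hpm tendsto_id) hθ0 hlim
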